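/- arXiv:1804.01331 — 2 statements merged into one kernel-verified Lean document; each statement's English description precedes it below -/
import Mathlib

section
/- Assume A and J are Fréchet differentiable, u ∈ U solves the primal problem (A(u)(v) = 0 for all v ∈ V), and z ∈ V solves the adjoint problem at u (A'(u)(φ)(z) = J'(u)(φ) for all φ ∈ U). Define L(û, ẑ) := J(û) − A(û)(ẑ) on U × V, and set x = (u, z), x̃ = (ũ, z̃), e = u − ũ, e* = z − z̃. Then L'(x)(x − x̃) + L'(x̃)(x − x̃) = ρ(ũ)(z − z̃) + ρ*(ũ, z̃)(u − ũ), where ρ(ũ)(·) := −A(ũ)(·) and ρ*(ũ, z̃)(·) := J'(ũ)(·) − A'(ũ)(·)(z̃), and L' denotes the Fréchet derivative of L on the product Banach space U × V. -/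
/-- With `L (û, ẑ) := J û - A û ẑ`, `u` solving the primal problem and `z` the adjoint
problem, for arbitrary `ũ, z̃` one has
`L'(u,z)(u-ũ, z-z̃) + L'(ũ,z̃)(u-ũ, z-z̃) = ρ(ũ)(z-z̃) + ρ*(ũ,z̃)(u-ũ)`,
where `ρ(ũ)(·) = -A(ũ)(·)` and `ρ*(ũ,z̃)(·) = J'(ũ)(·) - A'(ũ)(·)(z̃)`. -/
theorem lagrange_derivative_identity {U V : Type*}
    [NormedAddCommGroup U] [NormedSpace ℝ U] [CompleteSpace U]
    [NormedAddCommGroup V] [NormedSpace ℝ V] [CompleteSpace V]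
    (A : U → (V →L[ℝ] ℝ)) (J : U → ℝ)
    (hA : Differentiable ℝ A) (hJ : Differentiable ℝ J)
    (u : U) (z : V)
    (hu : ∀ v : V, A u v = 0)
    (hz : ∀ φ : U, (fderiv ℝ A u φ) z = fderiv ℝ J u φ)
    (L : U × V → ℝ) (hL : ∀ p : U × V, L p = J p.1 - A p.1 p.2)
    (ut : U) (zt : V) :
    (fderiv ℝ L (u, z)) (u - ut, z - zt) + (fderiv ℝ L (ut, zt)) (u - ut, z - zt)
      = (-(A ut)) (z - zt) + (fderiv ℝ J ut (u - ut) - (fderiv ℝ A ut (u - ut)) zt) := by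
  have key : ∀ (a : U) (b : V) (h : U) (k : V), fderiv ℝ L (a, b) (h, k)
      = fderiv ℝ J a h - (A a k + (fderiv ℝ A a h) b) := by
    intro a b h k
    have hfst : HasFDerivAt (fun p : U × V => p.1) (ContinuousLinearMap.fst ℝ U V) (a, b) :=
      hasFDerivAt_fst
    have hsnd : HasFDerivAt (fun p : U × V => p.2) (ContinuousLinearMap.snd ℝ U V) (a, b) :=
      hasFDerivAt_snd
    have h1 := HasFDerivAt.comp (a, b) (hJ a).hasFDerivAt hfst
    have h2 := HasFDerivAt.comp (a, b) (hA a).hasFDerivAt hfst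
    have h3 := h1.sub (h2.clm_apply hsnd)
    have h4 : L = (J ∘ fun p : U × V => p.1) -
        fun p : U × V => (A ∘ fun p : U × V => p.1) p p.2 := by
      funext p
      simp [hL]
    rw [h4, h3.fderiv]
    simp
  rw [key, key, hu, hz]
  simp only [ContinuousLinearMap.neg_apply]
  ring
end

section
/- (Galerkin case of the error representation) In the setting of the error representation theorem, suppose additionally that V_h is a subspace of V, that ũ = u_h ∈ U satisfies the discrete primal problem A(u_h)(v_h) = 0 for all v_h ∈ V_h, and that z̃ ∈ V_h. Then ρ(u_h)(z̃) = 0, and consequently J(u) − J(u_h) = (1/2)ρ(u_h)(z − z̃) + (1/2)ρ*(u_h, z̃)(u − u_h) + R, with ρ, ρ* and the remainder R defined as in the error representation theorem (with e = u − u_h, e* = z − z̃). -/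
theorem aux_line {U F : Type*} [NormedAddCommGroup U] [NormedSpace ℝ U]
    [NormedAddCommGroup F] [NormedSpace ℝ F] (f : U → F) (hf : ContDiff ℝ 3 f) (x e : U)
    (n : ℕ) (hn : n < 3) (s : ℝ) :
    HasDerivAt (fun s : ℝ => iteratedFDeriv ℝ n f (x + s • e) (fun _ => e))
      (iteratedFDeriv ℝ (n + 1) f (x + s • e) (fun _ => e)) s := by
  have h1 : Differentiable ℝ (iteratedFDeriv ℝ n f) :=
    hf.differentiable_iteratedFDeriv (by exact_mod_cast hn)
  have h2 : HasDerivAt (fun s : ℝ => x + s • e) e s := by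
    simpa using ((hasDerivAt_id s).smul_const e).const_add x
  have h3 := (h1 (x + s • e)).hasFDerivAt.comp_hasDerivAt s h2
  have h4 := (ContinuousMultilinearMap.apply ℝ (fun _ : Fin n => U) F
    (fun _ => e)).hasFDerivAt.comp_hasDerivAt s h3
  rw [iteratedFDeriv_succ_apply_left]
  exact h4

theorem aux_cont {U F : Type*} [NormedAddCommGroup U] [NormedSpace ℝ U]
    [NormedAddCommGroup F] [NormedSpace ℝ F] (f : U → F) (hf : ContDiff ℝ 3 f) (x e : U)
    (n : ℕ) (hn : n ≤ 3) :
    Continuous (fun s : ℝ => iteratedFDeriv ℝ n f (x + s • e) (fun _ => e)) := by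
  have h1 : Continuous (iteratedFDeriv ℝ n f) :=
    hf.continuous_iteratedFDeriv (by exact_mod_cast hn)
  have h2 : Continuous (fun s : ℝ => iteratedFDeriv ℝ n f (x + s • e)) :=
    h1.comp (by fun_prop)
  exact (ContinuousMultilinearMap.apply ℝ (fun _ : Fin n => U) F
    (fun _ => e)).continuous.comp h2


/-- Galerkin case of the error representation: if additionally `V_h ⊆ V` is a subspace,
`u_h` solves the discrete primal problem `A u_h v_h = 0` for all `v_h ∈ V_h`, and
`z̃ ∈ V_h`, then `ρ(u_h)(z̃) = 0` and
`J u - J u_h = ½ ρ(u_h)(z - z̃) + ½ ρ*(u_h,z̃)(u - u_h) + R`. -/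
theorem error_representation_galerkin {U V : Type*}
    [NormedAddCommGroup U] [NormedSpace ℝ U] [CompleteSpace U]
    [NormedAddCommGroup V] [NormedSpace ℝ V] [CompleteSpace V]
    (A : U → (V →L[ℝ] ℝ)) (J : U → ℝ)
    (hA : ContDiff ℝ 3 A) (hJ : ContDiff ℝ 3 J)
    (u : U) (z : V)
    (hu : ∀ v : V, A u v = 0)
    (hz : ∀ φ : U, (fderiv ℝ A u φ) z = fderiv ℝ J u φ)
    (Vh : Subspace ℝ V) (uh : U)
    (huh : ∀ vh ∈ Vh, A uh vh = 0)
    (zt : V) (hzt : zt ∈ Vh) :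
    (-(A uh)) zt = 0 ∧
    J u - J uh
      = (1 / 2) * ((-(A uh)) (z - zt))
        + (1 / 2) * (fderiv ℝ J uh (u - uh) - (fderiv ℝ A uh (u - uh)) zt)
        + (1 / 2) * ∫ s in (0 : ℝ)..1,
            (iteratedFDeriv ℝ 3 J (uh + s • (u - uh)) ![u - uh, u - uh, u - uh]
              - (iteratedFDeriv ℝ 3 A (uh + s • (u - uh)) ![u - uh, u - uh, u - uh])
                  (zt + s • (z - zt))
              - 3 * (iteratedFDeriv ℝ 2 A (uh + s • (u - uh)) ![u - uh, u - uh]) (z - zt))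
            * (s * (s - 1)) := by
  have hrho : (A uh) zt = 0 := huh zt hzt
  refine ⟨by simp [hrho], ?_⟩
  obtain ⟨e, he⟩ : ∃ e, e = u - uh := ⟨_, rfl⟩
  obtain ⟨es, hes⟩ : ∃ es, es = z - zt := ⟨_, rfl⟩
  have hue : uh + (1 : ℝ) • e = u := by rw [he]; simp
  have hze : zt + (1 : ℝ) • es = z := by rw [hes]; simp
  have v3 : (![e, e, e] : Fin 3 → U) = fun _ => e := by
    ext i; fin_cases i <;> rfl
  have v2 : (![e, e] : Fin 2 → U) = fun _ => e := by
    ext i; fin_cases i <;> rfl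
  rw [← he, ← hes, v3, v2]
  let j : ℕ → ℝ → ℝ := fun n s => iteratedFDeriv ℝ n J (uh + s • e) (fun _ => e)
  let a : ℕ → ℝ → (V →L[ℝ] ℝ) := fun n s => iteratedFDeriv ℝ n A (uh + s • e) (fun _ => e)
  have hj : ∀ n < 3, ∀ s, HasDerivAt (j n) (j (n+1) s) s :=
    fun n hn s => aux_line J hJ uh e n hn s
  have ha : ∀ n < 3, ∀ s, HasDerivAt (a n) (a (n+1) s) s :=
    fun n hn s => aux_line A hA uh e n hn s
  have hzs : ∀ s : ℝ, HasDerivAt (fun s : ℝ => zt + s • es) es s := fun s => by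
    simpa using ((hasDerivAt_id s).smul_const es).const_add zt
  have haz : ∀ n < 3, ∀ s, HasDerivAt (fun s => a n s (zt + s • es))
      (a (n+1) s (zt + s • es) + a n s es) s :=
    fun n hn s => (ha n hn s).clm_apply (hzs s)
  have hac : ∀ n < 3, ∀ s, HasDerivAt (fun s => a n s es) (a (n+1) s es) s := fun n hn s => by
    simpa using (ha n hn s).clm_apply (hasDerivAt_const s es)
  have cj : Continuous (j 3) := aux_cont J hJ uh e 3 le_rfl
  have ca3 : Continuous (a 3) := aux_cont A hA uh e 3 le_rfl
  have ca2 : Continuous (a 2) := aux_cont A hA uh e 2 (by norm_num)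
  let L0 : ℝ → ℝ := fun s => j 0 s - a 0 s (zt + s • es)
  let L1 : ℝ → ℝ := fun s => j 1 s - a 1 s (zt + s • es) - a 0 s es
  let L2 : ℝ → ℝ := fun s => j 2 s - a 2 s (zt + s • es) - 2 * a 1 s es
  let L3 : ℝ → ℝ := fun s => j 3 s - a 3 s (zt + s • es) - 3 * a 2 s es
  have d0 : ∀ s, HasDerivAt L0 (L1 s) s := fun s => by
    refine ((hj 0 (by norm_num) s).sub (haz 0 (by norm_num) s)).congr_deriv ?_
    simp only [L1]; ring
  have d1 : ∀ s, HasDerivAt L1 (L2 s) s := fun s => by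
    refine (((hj 1 (by norm_num) s).sub (haz 1 (by norm_num) s)).sub
      (hac 0 (by norm_num) s)).congr_deriv ?_
    simp only [L2]; ring
  have d2 : ∀ s, HasDerivAt L2 (L3 s) s := fun s => by
    refine (((hj 2 (by norm_num) s).sub (haz 2 (by norm_num) s)).sub
      ((hac 1 (by norm_num) s).const_mul 2)).congr_deriv ?_
    simp only [L3]; ring
  have c3 : Continuous L3 := by
    have h1 : Continuous fun s : ℝ => a 3 s (zt + s • es) := ca3.clm_apply (by fun_prop)
    have h2 : Continuous fun s : ℝ => a 2 s es := ca2.clm_apply continuous_const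
    exact (cj.sub h1).sub (continuous_const.mul h2)
  have key : ∫ s in (0 : ℝ)..1, L3 s * (s * (s - 1)) =
      (L2 1 * (1 * (1 - 1)) - L1 1 * (2 * 1 - 1) + 2 * L0 1)
      - (L2 0 * (0 * (0 - 1)) - L1 0 * (2 * 0 - 1) + 2 * L0 0) := by
    refine intervalIntegral.integral_eq_sub_of_hasDerivAt
      (f := fun s => L2 s * (s * (s - 1)) - L1 s * (2 * s - 1) + 2 * L0 s) (fun s _ => ?_)
      (Continuous.intervalIntegrable (by fun_prop) _ _)
    have p1 : HasDerivAt (fun s : ℝ => s * (s - 1)) (1 * (s - 1) + s * 1) s :=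
      (hasDerivAt_id s).mul ((hasDerivAt_id s).sub_const 1)
    have p2 : HasDerivAt (fun s : ℝ => 2 * s - 1) (2 * 1) s :=
      ((hasDerivAt_id s).const_mul 2).sub_const 1
    refine ((((d2 s).mul p1).sub ((d1 s).mul p2)).add ((d0 s).const_mul 2)).congr_deriv ?_
    ring
  have hj1 : ∀ s, j 1 s = fderiv ℝ J (uh + s • e) e := fun s => by
    simp only [j, iteratedFDeriv_one_apply]
  have ha1 : ∀ s, a 1 s = fderiv ℝ A (uh + s • e) e := fun s => by
    simp only [a, iteratedFDeriv_one_apply]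
  have hj0 : ∀ s, j 0 s = J (uh + s • e) := fun s => by
    simp only [j, iteratedFDeriv_zero_apply]
  have ha0 : ∀ s, a 0 s = A (uh + s • e) := fun s => by
    simp only [a, iteratedFDeriv_zero_apply]
  have e1 : L1 1 = 0 := by
    simp only [L1, hj1, ha1, ha0, hue, hze, hu, hz]; ring
  have e2 : L1 0 = fderiv ℝ J uh e - fderiv ℝ A uh e zt - A uh es := by
    simp only [L1, hj1, ha1, ha0, zero_smul, add_zero]
  have e3 : L0 1 = J u := by
    simp only [L0, hj0, ha0, hue, hu, sub_zero]
  have e4 : L0 0 = J uh := by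
    simp only [L0, hj0, ha0, zero_smul, add_zero, hrho, sub_zero]
  change _ = _ + 1 / 2 * ∫ s in (0 : ℝ)..1, L3 s * (s * (s - 1))
  rw [key, e1, e2, e3, e4, ContinuousLinearMap.neg_apply]
  ring
end
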